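/- Let X be a locally compact Hausdorff space and let ζ be a quasi-integral on X. Then for every nonnegative f ∈ C_c(X), ζ(f) = ∫_0^{max f} τ_ζ({x ∈ X : f(x) ≥ t}) dt, where for each t > 0 the set {f ≥ t} is compact and τ_ζ is the induced set function of ζ. -/

import Mathlib

/-!
The proof is a layer-cake argument. Write `f ∧ t` for the truncation of `f ≥ 0` at height `t ≥ 0`
and put `F t = ζ (f ∧ t)`. For `0 < s < t` the layer `f ∧ t - f ∧ s` satisfies
`(t - s) 1_{f ≥ t} ≤ f ∧ t - f ∧ s ≤ (t - s) 1_{f ≥ s}`, and all functions involved are of the form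
`φ ∘ f`, so quasi-linearity gives
`(t - s) τ{f ≥ t} ≤ F t - F s ≤ (t - s) τ{f ≥ s}` (`QuasiIntegral.mul_tauCompact_le`,
`QuasiIntegral.le_mul_tauCompact`).
Hence `t ↦ τ{f ≥ t}` is antitone, and bounded because `F` is Lipschitz; squeezing the difference
quotients of `F` shows that `F' t = τ{f ≥ t}` wherever the right-hand side is continuous, i.e. off a
countable set. The fundamental theorem of calculus off a countable set, applied to `F` on
`[0, max f]`, finishes the proof, since `F 0 = 0` and `F (max f) = ζ f`.
-/

open Set Topology
open scoped CompactlySupported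

noncomputable section

/-- The family `𝒜(X)` of admissible sets: compact sets together with
open sets with compact closure. -/
def Admissible (X : Type*) [TopologicalSpace X] : Set (Set X) :=
  {A | IsCompact A ∨ (IsOpen A ∧ IsCompact (closure A))}

/-- A quasi-integral on `X`: a monotone, locally Lipschitz (w.r.t. the uniform norm,
on functions with support in a fixed compact set) functional on `C_c(X, ℝ)` which is
linear on every subspace of the form `{φ ∘ f | φ ∈ C(ℝ), φ 0 = 0}`. -/
structure QuasiIntegral (X : Type*) [TopologicalSpace X] where
  toFun : C_c(X, ℝ) → ℝ
  mono' : ∀ f g : C_c(X, ℝ), (∀ x, f x ≤ g x) → toFun f ≤ toFun g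
  lipschitz' : ∀ K : Set X, IsCompact K → ∃ N : ℝ, 0 ≤ N ∧
    ∀ f g : C_c(X, ℝ), tsupport ⇑f ⊆ K → tsupport ⇑g ⊆ K →
      |toFun f - toFun g| ≤ N * ⨆ x, |f x - g x|
  quasilin_add' : ∀ (f : C_c(X, ℝ)) (φ ψ : ℝ → ℝ), Continuous φ → Continuous ψ →
    φ 0 = 0 → ψ 0 = 0 → ∀ gφ gψ gs : C_c(X, ℝ),
    (∀ x, gφ x = φ (f x)) → (∀ x, gψ x = ψ (f x)) →
    (∀ x, gs x = φ (f x) + ψ (f x)) → toFun gs = toFun gφ + toFun gψ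
  quasilin_smul' : ∀ (f : C_c(X, ℝ)) (φ : ℝ → ℝ), Continuous φ → φ 0 = 0 →
    ∀ (c : ℝ) (gφ gc : C_c(X, ℝ)),
    (∀ x, gφ x = φ (f x)) → (∀ x, gc x = c * φ (f x)) → toFun gc = c * toFun gφ

/-- A topological measure on `X` (normalized to vanish on non-admissible sets):
a nonnegative, additive, monotone, regular set function on `𝒜(X)`. -/
structure TopMeasure (X : Type*) [TopologicalSpace X] where
  toFun : Set X → ℝ
  zero_of_not_mem' : ∀ A : Set X, A ∉ Admissible X → toFun A = 0
  nonneg' : ∀ A : Set X, 0 ≤ toFun A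
  additive' : ∀ A A' : Set X, A ∈ Admissible X → A' ∈ Admissible X →
    A ∪ A' ∈ Admissible X → Disjoint A A' → toFun (A ∪ A') = toFun A + toFun A'
  mono' : ∀ A A' : Set X, A ∈ Admissible X → A' ∈ Admissible X → A ⊆ A' →
    toFun A ≤ toFun A'
  outer_reg' : ∀ K : Set X, IsCompact K →
    toFun K = sInf (toFun '' {O : Set X | IsOpen O ∧ IsCompact (closure O) ∧ K ⊆ O})
  inner_reg' : ∀ O : Set X, IsOpen O → IsCompact (closure O) →
    toFun O = sSup (toFun '' {K : Set X | IsCompact K ∧ K ⊆ O})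

variable {X : Type*} [TopologicalSpace X]

/-- `τ_ζ(K) = inf {ζ(f) | f ∈ C_c(X), f ≥ 1_K}`, for `K` compact. -/
def tauCompact (ζ : QuasiIntegral X) (K : Set X) : ℝ :=
  sInf (ζ.toFun '' {f : C_c(X, ℝ) | ∀ x, K.indicator (fun _ => (1 : ℝ)) x ≤ f x})

/-- `τ_ζ(O) = sup {ζ(f) | f ∈ C_c(X), f ≤ 1_O}`, for `O` open with compact closure. -/
def tauOpen (ζ : QuasiIntegral X) (O : Set X) : ℝ :=
  sSup (ζ.toFun '' {f : C_c(X, ℝ) | ∀ x, f x ≤ O.indicator (fun _ => (1 : ℝ)) x})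

open scoped Classical in
/-- The induced set function `τ_ζ` of a quasi-integral `ζ`. -/
def inducedSetFun (ζ : QuasiIntegral X) (A : Set X) : ℝ :=
  if IsCompact A then tauCompact ζ A
  else if IsOpen A ∧ IsCompact (closure A) then tauOpen ζ A
  else 0

/-- The real-variable part of the layer-cake argument: if a continuous `F` on `[0, M]` has all its
difference quotients on `(0, ∞)` between the values of an antitone `T` at the endpoints, then
`T` integrates to the increment of `F`. -/
lemma integral_eq_sub_of_antitone_slope {F T : ℝ → ℝ} {M : ℝ} (hM : 0 ≤ M) (hT : Antitone T)
    (hF : ContinuousOn F (Icc 0 M))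
    (hlo : ∀ s t, 0 < s → s < t → (t - s) * T t ≤ F t - F s)
    (hup : ∀ s t, 0 < s → s < t → F t - F s ≤ (t - s) * T s) :
    ∫ t in (0 : ℝ)..M, T t = F M - F 0 := by
  refine MeasureTheory.integral_eq_of_hasDerivAt_off_countable_of_le F T hM
    hT.countable_not_continuousAt hF ?_ hT.intervalIntegrable
  rintro x ⟨⟨hx0, -⟩, hx⟩
  have hc : ContinuousAt T x := by simpa using hx
  rw [hasDerivAt_iff_tendsto_slope]
  have hc' : Filter.Tendsto T (𝓝[≠] x) (𝓝 (T x)) := hc.tendsto.mono_left nhdsWithin_le_nhds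
  -- The slope between `x` and `y` lies between `T x` and `T y`.
  have hbd : ∀ᶠ y in 𝓝[≠] x, min (T x) (T y) ≤ slope F x y ∧ slope F x y ≤ max (T x) (T y) := by
    filter_upwards [self_mem_nhdsWithin, nhdsWithin_le_nhds (Ioi_mem_nhds hx0)] with y hne hy
    rcases lt_or_gt_of_ne hne with h | h
    · have h' : 0 < x - y := sub_pos.2 h
      rw [slope_comm, slope_def_field]
      exact ⟨(min_le_left _ _).trans
          ((le_div_iff₀ h').2 (by linarith [hlo y x hy h, mul_comm (T x) (x - y)])),
        le_trans ((div_le_iff₀ h').2 (by linarith [hup y x hy h, mul_comm (T y) (x - y)]))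
          (le_max_right _ _)⟩
    · have h' : 0 < y - x := sub_pos.2 h
      rw [slope_def_field]
      exact ⟨(min_le_right _ _).trans
          ((le_div_iff₀ h').2 (by linarith [hlo x y hx0 h, mul_comm (T y) (y - x)])),
        le_trans ((div_le_iff₀ h').2 (by linarith [hup x y hx0 h, mul_comm (T x) (y - x)]))
          (le_max_left _ _)⟩
  have hmin := (tendsto_const_nhds (x := T x)).min hc'
  have hmax := (tendsto_const_nhds (x := T x)).max hc'
  rw [min_self] at hmin
  rw [max_self] at hmax
  exact tendsto_of_tendsto_of_tendsto_of_le_of_le' hmin hmax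
    (hbd.mono fun _ h => h.1) (hbd.mono fun _ h => h.2)

/-- The truncation `x ↦ min (f x) t` of `f` at height `t`. Negative heights are replaced by `0`, so
that the truncation has compact support for every `t`. -/
def truncAt (f : C_c(X, ℝ)) (t : ℝ) : C_c(X, ℝ) :=
  f.compLeft ⟨fun y => min y (max t 0), by fun_prop⟩

lemma truncAt_apply (f : C_c(X, ℝ)) {t : ℝ} (ht : 0 ≤ t) (x : X) :
    truncAt f t x = min (f x) t := by
  unfold truncAt
  rw [CompactlySupportedContinuousMap.compLeft_apply (by simp)]
  simp [ht]

namespace QuasiIntegral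

variable (ζ : QuasiIntegral X)

lemma map_zero : ζ.toFun 0 = 0 := by
  have := ζ.quasilin_smul' 0 (fun y => y) continuous_id rfl 0 0 0 (by simp) (by simp)
  simpa using this

lemma map_smul (c : ℝ) (f : C_c(X, ℝ)) : ζ.toFun (c • f) = c * ζ.toFun f :=
  ζ.quasilin_smul' f (fun y => y) continuous_id rfl c f (c • f) (by simp) (by simp)

/-- `ζ` is additive along the layers of `f`, since the truncations of `f` are functions of `f`. -/
lemma map_layer (f : C_c(X, ℝ)) {s t : ℝ} (hs : 0 ≤ s) (ht : 0 ≤ t) :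
    ζ.toFun (truncAt f t - truncAt f s) = ζ.toFun (truncAt f t) - ζ.toFun (truncAt f s) := by
  have := ζ.quasilin_add' f (fun y => min y s) (fun y => min y t - min y s)
    (by fun_prop) (by fun_prop) (by simp [hs]) (by simp [hs, ht])
    (truncAt f s) (truncAt f t - truncAt f s) (truncAt f t)
    (fun x => truncAt_apply f hs x) (fun x => by simp [truncAt_apply, hs, ht])
    (fun x => by simp [truncAt_apply, ht])
  linarith

lemma bddBelow_tauCompact (K : Set X) :
    BddBelow (ζ.toFun '' {f : C_c(X, ℝ) | ∀ x, K.indicator (fun _ => (1 : ℝ)) x ≤ f x}) := by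
  refine ⟨0, ?_⟩
  rintro _ ⟨g, hg, rfl⟩
  rw [← ζ.map_zero]
  exact ζ.mono' _ _ fun x => (indicator_nonneg (fun _ _ => zero_le_one) x).trans (hg x)

lemma mul_tauCompact_le (f : C_c(X, ℝ)) {s t : ℝ} (hs : 0 ≤ s) (hst : s < t) :
    (t - s) * tauCompact ζ {x | t ≤ f x} ≤ ζ.toFun (truncAt f t) - ζ.toFun (truncAt f s) := by
  have h' : 0 < t - s := sub_pos.2 hst
  have ht : 0 ≤ t := hs.trans hst.le
  rw [← ζ.map_layer f hs ht, mul_comm, ← le_div_iff₀ h', div_eq_inv_mul, ← map_smul]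
  refine csInf_le (ζ.bddBelow_tauCompact _) ⟨_, fun x => ?_, rfl⟩
  have hx : ((t - s)⁻¹ • (truncAt f t - truncAt f s)) x = (t - s)⁻¹ * (min (f x) t - min (f x) s) := by
    simp [truncAt_apply, hs, ht]
  rw [hx]
  by_cases h : t ≤ f x
  · rw [indicator_of_mem (by exact h), min_eq_right h, min_eq_right (hst.le.trans h),
      inv_mul_cancel₀ h'.ne']
  · rw [indicator_of_notMem (by exact h)]
    exact mul_nonneg (inv_nonneg.2 h'.le) (sub_nonneg.2 (min_le_min_left _ hst.le))

lemma le_mul_tauCompact (f : C_c(X, ℝ)) (hf : ∀ x, 0 ≤ f x) {s t : ℝ} (hs : 0 < s) (hst : s < t) :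
    ζ.toFun (truncAt f t) - ζ.toFun (truncAt f s) ≤ (t - s) * tauCompact ζ {x | s ≤ f x} := by
  have h' : 0 < t - s := sub_pos.2 hst
  have ht : 0 ≤ t := hs.le.trans hst.le
  rw [← ζ.map_layer f hs.le ht, mul_comm, ← div_le_iff₀ h']
  refine le_csInf ⟨_, s⁻¹ • f, fun x => ?_, rfl⟩ ?_
  · rw [CompactlySupportedContinuousMap.smul_apply, smul_eq_mul]
    by_cases h : s ≤ f x
    · rw [indicator_of_mem (by exact h), ← div_eq_inv_mul, le_div_iff₀ hs, one_mul]
      exact h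
    · rw [indicator_of_notMem (by exact h)]
      exact mul_nonneg (inv_nonneg.2 hs.le) (hf x)
  · rintro _ ⟨g, hg, rfl⟩
    rw [div_le_iff₀ h', mul_comm, ← map_smul]
    refine ζ.mono' _ _ fun x => ?_
    have hgx := hg x
    have hx : (truncAt f t - truncAt f s) x = min (f x) t - min (f x) s := by
      simp [truncAt_apply, hs.le, ht]
    rw [hx, CompactlySupportedContinuousMap.smul_apply, smul_eq_mul]
    by_cases h : s ≤ f x
    · rw [indicator_of_mem (by exact h)] at hgx
      rw [min_eq_right h]
      nlinarith [min_le_right (f x) t]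
    · rw [indicator_of_notMem (by exact h)] at hgx
      rw [min_eq_left (not_le.1 h).le, min_eq_left ((not_le.1 h).le.trans hst.le), sub_self]
      exact mul_nonneg h'.le hgx

/-- `t ↦ ζ (f ∧ t)` is Lipschitz, since all truncations are supported in the support of `f`. -/
lemma exists_lipschitz_truncAt (f : C_c(X, ℝ)) : ∃ N : ℝ, 0 ≤ N ∧ ∀ s t : ℝ, 0 ≤ s → 0 ≤ t →
    |ζ.toFun (truncAt f t) - ζ.toFun (truncAt f s)| ≤ N * |t - s| := by
  obtain ⟨N, hN, h⟩ := ζ.lipschitz' (tsupport f) f.hasCompactSupport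
  have hsupp : ∀ t, 0 ≤ t → tsupport (truncAt f t) ⊆ tsupport f := fun t ht =>
    closure_mono fun x hx hfx => hx (by simp [truncAt_apply, ht, hfx])
  refine ⟨N, hN, fun s t hs ht => (h _ _ (hsupp t ht) (hsupp s hs)).trans ?_⟩
  refine mul_le_mul_of_nonneg_left (Real.iSup_le (fun x => ?_) (abs_nonneg _)) hN
  rw [truncAt_apply f ht, truncAt_apply f hs]
  exact (abs_min_sub_min_le_max _ _ _ _).trans (by simp)

end QuasiIntegral

lemma isCompact_superlevel (f : C_c(X, ℝ)) {t : ℝ} (ht : 0 < t) : IsCompact {x : X | t ≤ f x} := by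
  refine f.hasCompactSupport.of_isClosed_subset (isClosed_le continuous_const f.continuous) ?_
  intro x hx
  refine subset_tsupport _ (ne_of_gt ?_)
  exact ht.trans_le hx

/-- for a quasi-integral `ζ` on `X` and a nonnegative `f ∈ C_c(X)`,
`ζ(f) = ∫₀^{max f} τ_ζ({f ≥ t}) dt`, the set `{f ≥ t}` being compact for `t > 0`. -/
theorem quasiIntegral_eq_integral_inducedSetFun {X : Type*} [TopologicalSpace X]
    [T2Space X] [LocallyCompactSpace X] (ζ : QuasiIntegral X) (f : C_c(X, ℝ))
    (hf : ∀ x, 0 ≤ f x) :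
    (∀ t : ℝ, 0 < t → IsCompact {x : X | t ≤ f x}) ∧
    ζ.toFun f = ∫ t in (0 : ℝ)..(⨆ x, f x), inducedSetFun ζ {x : X | t ≤ f x} := by
  refine ⟨fun t ht => isCompact_superlevel f ht, ?_⟩
  obtain ⟨N, hN, hL⟩ := ζ.exists_lipschitz_truncAt f
  have hb : BddAbove (range f) := (f.hasCompactSupport.isCompact_range f.continuous).bddAbove
  have hM : 0 ≤ ⨆ x, f x := Real.iSup_nonneg hf
  set F : ℝ → ℝ := fun t => ζ.toFun (truncAt f t) with hF
  set τ : ℝ → ℝ := fun t => tauCompact ζ {x | t ≤ f x} with hτ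
  have hF0 : F 0 = 0 := by
    have : truncAt f 0 = 0 := by ext x; simp [truncAt_apply, hf]
    simp [hF, this, ζ.map_zero]
  have hFM : F (⨆ x, f x) = ζ.toFun f := by
    have : truncAt f (⨆ x, f x) = f := by
      ext x
      rw [truncAt_apply f hM, min_eq_left (le_ciSup hb x)]
    simp [hF, this]
  have hlo : ∀ s t, 0 ≤ s → s < t → (t - s) * τ t ≤ F t - F s :=
    fun s t hs hst => ζ.mul_tauCompact_le f hs hst
  have hup : ∀ s t, 0 < s → s < t → F t - F s ≤ (t - s) * τ s :=
    fun s t hs hst => ζ.le_mul_tauCompact f hf hs hst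
  have hτN : ∀ t, 0 < t → τ t ≤ N := fun t ht => by
    have h1 := hlo 0 t le_rfl ht
    have h2 := (le_abs_self _).trans (hL 0 t le_rfl ht.le)
    rw [sub_zero] at h1 h2
    rw [abs_of_pos ht] at h2
    exact le_of_mul_le_mul_left (by linarith) ht
  have hτanti : ∀ s t, 0 < s → s ≤ t → τ t ≤ τ s := fun s t hs hst => by
    rcases hst.eq_or_lt with rfl | h
    · rfl
    · exact le_of_mul_le_mul_left ((hlo s t hs.le h).trans (hup s t hs h)) (sub_pos.2 h)
  -- `τ` is only controlled at positive heights; the Lipschitz constant is an antitone extension.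
  set T : ℝ → ℝ := fun t => if 0 < t then τ t else N with hT
  have hTpos : ∀ t, 0 < t → T t = τ t := fun t ht => if_pos ht
  have hTanti : Antitone T := fun s t hst => by
    by_cases hs : 0 < s
    · rw [hTpos s hs, hTpos t (hs.trans_le hst)]
      exact hτanti s t hs hst
    · have hs' : T s = N := if_neg hs
      rw [hs']
      by_cases ht : 0 < t
      · rw [hTpos t ht]
        exact hτN t ht
      · exact (if_neg ht : T t = N).le
  have hFc : ContinuousOn F (Icc 0 (⨆ x, f x)) := by
    refine (LipschitzOnWith.of_dist_le_mul (K := ⟨N, hN⟩) fun s hs t ht => ?_).continuousOn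
    exact hL t s ht.1 hs.1
  have key := integral_eq_sub_of_antitone_slope hM hTanti hFc
    (fun s t hs hst => by rw [hTpos t (hs.trans hst)]; exact hlo s t hs.le hst)
    (fun s t hs hst => by rw [hTpos s hs]; exact hup s t hs hst)
  rw [hF0, hFM, sub_zero] at key
  rw [← key]
  refine intervalIntegral.integral_congr_ae (Filter.Eventually.of_forall fun t ht => ?_)
  rw [uIoc_of_le hM] at ht
  rw [hTpos t ht.1, inducedSetFun, if_pos (isCompact_superlevel f ht.1)]

end
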